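/- arXiv:math/0701431 — 3 statements merged into one kernel-verified Lean document; each statement's English description precedes it below -/
import Mathlib

section
/- Let Γ be a group and Γ₀ ≤ Γ a subgroup of index two. Then a subgroup H ≤ Γ is separable in Γ if and only if H ∩ Γ₀ is separable in Γ₀. -/
/-- A subgroup `H` of a group `G` is separable in `G` if for every `g ∈ G` with `g ∉ H`
there exists a finite-index subgroup `K` of `G` with `H ≤ K` and `g ∉ K`. -/
def SeparableSubgroup {G : Type*} [Group G] (H : Subgroup G) : Prop :=
  ∀ g : G, g ∉ H → ∃ K : Subgroup G, K.FiniteIndex ∧ H ≤ K ∧ g ∉ K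

namespace SeparableSubgroup

variable {G G' ι : Type*} [Group G] [Group G'] {H L : Subgroup G}

theorem exists_finiteIndex_forall_notMem [Finite ι] (hH : SeparableSubgroup H) {g : ι → G}
    (hg : ∀ i, g i ∉ H) : ∃ K : Subgroup G, K.FiniteIndex ∧ H ≤ K ∧ ∀ i, g i ∉ K := by
  choose K hK hHK hgK using fun i => hH (g i) (hg i)
  exact ⟨⨅ i, K i, Subgroup.finiteIndex_iInf hK, le_iInf hHK,
    fun i hi => hgK i (iInf_le K i hi)⟩

theorem comap (f : G →* G') {H : Subgroup G'} (hH : SeparableSubgroup H) :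
    SeparableSubgroup (H.comap f) := by
  intro g hg
  obtain ⟨K, _, hHK, hgK⟩ := hH (f g) hg
  have hfin : (K.comap f).FiniteIndex := ⟨by
    rw [Subgroup.index_comap]
    exact Subgroup.isFiniteRelIndex_of_finiteIndex.relIndex_ne_zero⟩
  exact ⟨K.comap f, hfin, Subgroup.comap_mono hHK, hgK⟩

theorem map (f : G →* G') [f.range.FiniteIndex] (hker : f.ker ≤ L) (hL : SeparableSubgroup L) :
    SeparableSubgroup (L.map f) := by
  intro g hg
  by_cases hgf : g ∈ f.range
  · obtain ⟨x, rfl⟩ := hgf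
    obtain ⟨K, hK, hLK, hxK⟩ := hL x fun hx => hg (Subgroup.mem_map_of_mem f hx)
    have hkerK : f.ker ≤ K := hker.trans hLK
    have hfin : (K.map f).FiniteIndex := ⟨by
      rw [Subgroup.index_map, sup_of_le_left hkerK]
      exact mul_ne_zero hK.index_ne_zero Subgroup.FiniteIndex.index_ne_zero⟩
    refine ⟨K.map f, hfin, Subgroup.map_mono hLK, ?_⟩
    rwa [← Subgroup.mem_comap, Subgroup.comap_map_eq_self hkerK]
  · exact ⟨f.range, inferInstance, Subgroup.map_le_range f L, hgf⟩

/-- Write `H` as a finite union of cosets `hᵢL`. If `g ∉ H`, then no `hᵢ⁻¹g` lies in `L`, so a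
single finite-index `K ≥ L` omits all of them. With `N` the normal core of `K`, the group
`H ⊔ N = HN` omits `g`: if `g = hn` with `h ∈ hᵢL`, then `hᵢ⁻¹g = (hᵢ⁻¹h)n ∈ LN ≤ K`. -/
theorem of_isFiniteRelIndex [L.IsFiniteRelIndex H] (hLH : L ≤ H) (hL : SeparableSubgroup L) :
    SeparableSubgroup H := by
  intro g hg
  have hcoset (q : H ⧸ L.subgroupOf H) : (q.out : G)⁻¹ * g ∉ L := fun hq =>
    hg ((H.mul_mem_cancel_left (H.inv_mem q.out.2)).mp (hLH hq))
  obtain ⟨K, _, hLK, hgK⟩ := hL.exists_finiteIndex_forall_notMem hcoset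
  refine ⟨H ⊔ K.normalCore, Subgroup.finiteIndex_of_le le_sup_right, le_sup_left, fun hgHK => ?_⟩
  obtain ⟨h, hh, n, hn, rfl⟩ := Subgroup.mem_sup_of_normal_right.mp hgHK
  let q : H ⧸ L.subgroupOf H := (⟨h, hh⟩ : H)
  have hq : q.out⁻¹ * ⟨h, hh⟩ ∈ L.subgroupOf H := QuotientGroup.eq.mp q.out_eq'
  apply hgK q
  rw [← mul_assoc]
  exact K.mul_mem (hLK hq) (K.normalCore_le hn)

end SeparableSubgroup

theorem separable_iff_separable_in_index_two_general {Γ : Type*} [Group Γ]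
    (Γ₀ : Subgroup Γ) [Γ₀.FiniteIndex] (H : Subgroup Γ) :
    SeparableSubgroup H ↔ SeparableSubgroup ((H ⊓ Γ₀).subgroupOf Γ₀) := by
  constructor
  · intro hH
    rw [Subgroup.inf_subgroupOf_right]
    exact hH.comap Γ₀.subtype
  · intro hH₀
    have : Γ₀.subtype.range.FiniteIndex := by rwa [Subgroup.range_subtype]
    have hinf : SeparableSubgroup (H ⊓ Γ₀) := by
      simpa using hH₀.map Γ₀.subtype (by simp)
    have : (H ⊓ Γ₀).IsFiniteRelIndex H := ⟨by
      rw [Subgroup.inf_relIndex_left]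
      exact Subgroup.isFiniteRelIndex_of_finiteIndex.relIndex_ne_zero⟩
    exact hinf.of_isFiniteRelIndex inf_le_left

theorem separable_iff_separable_in_index_two {Γ : Type*} [Group Γ]
    (Γ₀ : Subgroup Γ) (hΓ₀ : Γ₀.index = 2) (H : Subgroup Γ) :
    SeparableSubgroup H ↔ SeparableSubgroup ((H ⊓ Γ₀).subgroupOf Γ₀) :=
  have : Γ₀.FiniteIndex := ⟨by simp [hΓ₀]⟩
  separable_iff_separable_in_index_two_general Γ₀ H
end

section
/- Let G be a residually finite group and let A ≤ G be a maximal abelian subgroup, i.e., A is commutative and is not properly contained in any commutative subgroup of G. Then A is a separable subgroup of G. -/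
/-!
A maximal abelian subgroup equals its own centralizer. In a residually finite group every
centralizer `C(s)` is separable: if `g` fails to commute with some `a ∈ s`, a finite quotient `φ`
in which the commutator `⁅a, g⁆` survives separates `g` from `C(s)` by the subgroup `φ⁻¹(C(φ(s)))`.
-/

/-- A group `G` is residually finite if every nontrivial element survives in some
finite quotient. -/
def ResiduallyFinite (G : Type*) [Group G] : Prop :=
  ∀ g : G, g ≠ 1 → ∃ (Q : Type) (_ : Group Q) (_ : Finite Q) (φ : G →* Q), φ g ≠ 1

open scoped commutatorElement in
theorem ResiduallyFinite.separableSubgroup_centralizer {G : Type*} [Group G]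
    (hG : ResiduallyFinite G) (s : Set G) : SeparableSubgroup (Subgroup.centralizer s) := by
  intro g hg
  obtain ⟨a, has, hag⟩ : ∃ a ∈ s, ⁅a, g⁆ ≠ 1 := by
    simpa only [Subgroup.mem_centralizer_iff_commutator_eq_one, not_forall, exists_prop] using hg
  obtain ⟨Q, _, _, φ, hφ⟩ := hG ⁅a, g⁆ hag
  refine ⟨(Subgroup.centralizer (φ '' s)).comap φ,
    Subgroup.finiteIndex_of_le (φ.ker_le_comap _),
    Subgroup.map_le_iff_le_comap.mp (Subgroup.map_centralizer_le_centralizer_image s φ),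
    fun hφg ↦ hφ ?_⟩
  rw [map_commutatorElement]
  exact Subgroup.mem_centralizer_iff_commutator_eq_one.mp hφg (φ a) (Set.mem_image_of_mem φ has)

theorem centralizer_eq_of_maximal_isMulCommutative {G : Type*} [Group G] {A : Subgroup G}
    (hA : Maximal (fun B : Subgroup G ↦ IsMulCommutative B) A) :
    Subgroup.centralizer (A : Set G) = A := by
  have := hA.prop
  refine le_antisymm (fun g hg ↦ ?_) A.le_centralizer
  have hcomm : ∀ x ∈ insert g (A : Set G), ∀ y ∈ insert g (A : Set G), x * y = y * x := by
    rintro x (rfl | hx) y (rfl | hy)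
    · rfl
    · exact (hg y hy).symm
    · exact hg x hx
    · exact setLike_mul_comm hx hy
  have hle : A ≤ Subgroup.closure (insert g (A : Set G)) :=
    fun _ hx ↦ Subgroup.subset_closure (Set.mem_insert_of_mem g hx)
  exact hA.le_of_ge (Subgroup.isMulCommutative_closure hcomm) hle
    (Subgroup.subset_closure (Set.mem_insert g A))

theorem maximal_abelian_separable {G : Type*} [Group G] (hG : ResiduallyFinite G)
    (A : Subgroup G)
    (hcomm : ∀ a ∈ A, ∀ b ∈ A, a * b = b * a)
    (hmax : ∀ B : Subgroup G, (∀ a ∈ B, ∀ b ∈ B, a * b = b * a) → A ≤ B → A = B) :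
    SeparableSubgroup A := by
  have hA : Maximal (fun B : Subgroup G ↦ IsMulCommutative B) A :=
    ⟨.of_setLike_mul_comm hcomm, fun B _ hAB ↦
      (hmax B (fun _ ha _ hb ↦ setLike_mul_comm ha hb) hAB).ge⟩
  rw [← centralizer_eq_of_maximal_isMulCommutative hA]
  exact hG.separableSubgroup_centralizer A
end

section
/- Let Γ be a group acting on a set X and let D be a finite set of ordered pairs (v, w) of points of X such that for each (v, w) ∈ D one has v ≠ w and the stabilizer Stab_Γ(v) = {γ ∈ Γ : γ•v = v} is separable in Γ. Then there exists a finite-index normal subgroup N ⊴ Γ such that for every (v, w) ∈ D, every γ ∈ Γ, and every δ ∈ N, one has δ•(γ•v) ≠ γ•w. -/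
/-!
If `w = g • v` lies in the `N`-orbit of `v`, then `g ∈ N ⊔ Stab(v)`. Separability of the stabilizer
gives a finite-index `K ≥ Stab(v)` missing `g`, and its normal core serves as `N`. Since the orbits
of a normal `N` are permuted by the whole group, excluding `w` from the `N`-orbit of `v` excludes
all translates at once; finitely many pairs are handled by intersecting.
-/

open MulAction
open scoped Pointwise

theorem SeparableSubgroup.exists_normal_finiteIndex_notMem_sup {G : Type*} [Group G]
    {H : Subgroup G} (hH : SeparableSubgroup H) {g : G} (hg : g ∉ H) :
    ∃ N : Subgroup G, N.Normal ∧ N.FiniteIndex ∧ g ∉ N ⊔ H := by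
  obtain ⟨K, hK, hHK, hgK⟩ := hH g hg
  exact ⟨K.normalCore, inferInstance, inferInstance,
    fun hmem => hgK (sup_le K.normalCore_le hHK hmem)⟩

section Orbits

variable {Γ X : Type*} [Group Γ] [MulAction Γ X] {v w : X}

theorem mem_sup_stabilizer_of_smul_mem_orbit {N : Subgroup Γ} {g : Γ} (h : g • v ∈ orbit N v) :
    g ∈ N ⊔ stabilizer Γ v := by
  obtain ⟨n, hn : (n : Γ) • v = g • v⟩ := h
  have hstab : (n : Γ)⁻¹ * g ∈ stabilizer Γ v := by
    rw [mem_stabilizer_iff, mul_smul, ← hn, inv_smul_smul]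
  simpa only [mul_inv_cancel_left] using Subgroup.mul_mem_sup n.2 hstab

theorem smul_mem_orbit_smul_iff (N : Subgroup Γ) [N.Normal] (γ : Γ) :
    γ • w ∈ orbit N (γ • v) ↔ w ∈ orbit N v := by
  rw [← smul_orbit_eq_orbit_smul, Set.smul_mem_smul_set_iff]

theorem exists_normal_finiteIndex_notMem_orbit (hvw : v ≠ w)
    (hv : SeparableSubgroup (stabilizer Γ v)) :
    ∃ N : Subgroup Γ, N.Normal ∧ N.FiniteIndex ∧ w ∉ orbit N v := by
  by_cases hw : w ∈ orbit Γ v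
  · obtain ⟨g, rfl⟩ := hw
    have hg : g ∉ stabilizer Γ v := fun hmem => hvw (mem_stabilizer_iff.mp hmem).symm
    obtain ⟨N, hN, hfin, hgN⟩ := hv.exists_normal_finiteIndex_notMem_sup hg
    exact ⟨N, hN, hfin, fun hmem => hgN (mem_sup_stabilizer_of_smul_mem_orbit hmem)⟩
  · exact ⟨⊤, inferInstance, inferInstance, fun hmem => hw (orbit_subgroup_subset ⊤ v hmem)⟩

end Orbits

theorem exists_normal_finiteIndex_no_returning_diagonals
    {Γ X : Type*} [Group Γ] [MulAction Γ X] (D : Finset (X × X))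
    (hne : ∀ p ∈ D, p.1 ≠ p.2)
    (hsep : ∀ p ∈ D, SeparableSubgroup (MulAction.stabilizer Γ p.1)) :
    ∃ N : Subgroup Γ, N.Normal ∧ N.FiniteIndex ∧
      ∀ p ∈ D, ∀ γ : Γ, ∀ δ ∈ N, δ • (γ • p.1) ≠ γ • p.2 := by
  choose N hnormal hfin horbit using fun p : D =>
    exists_normal_finiteIndex_notMem_orbit (hne p p.2) (hsep p p.2)
  refine ⟨⨅ p, N p, Subgroup.normal_iInf_normal hnormal, Subgroup.finiteIndex_iInf hfin, ?_⟩
  intro p hp γ δ hδ hreturn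
  have hδp : δ ∈ N ⟨p, hp⟩ := Subgroup.mem_iInf.mp hδ ⟨p, hp⟩
  have hmem : γ • p.2 ∈ orbit (N ⟨p, hp⟩) (γ • p.1) := ⟨⟨δ, hδp⟩, hreturn⟩
  have : (N ⟨p, hp⟩).Normal := hnormal ⟨p, hp⟩
  exact horbit ⟨p, hp⟩ ((smul_mem_orbit_smul_iff (N ⟨p, hp⟩) γ).mp hmem)
end
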